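/- Let k ∈ {1,2}. There exist δ₀ > 0, ε₀ > 0 and C > 0 such that for every δ ∈ (0, δ₀], every z ∈ K, every ζ' ∈ ℝ × ℝ^n and every t̂ ∈ ℝ × ℝ^n × ℝ with t̂_{ξd} ≥ 0 and |t̂'| ≤ ε₀ t̂_{ξd}: if μ̂_k(z,ζ',t̂) ≥ −δ λ̂⁴, then |t̂| ≤ C |ζ'|. -/

import Mathlib

/-- `m̂_k(z,ζ',t̂) = (-1)^k i (σ + i t̂_σ)² + r_z(ξ' + i t̂_{ξ'})`, where `r_z` is the
complex-bilinear extension of the quadratic form with coefficient matrix `R`. -/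
noncomputable def mhat {n : ℕ} (R : Fin n → Fin n → ℝ) (k : ℕ)
    (σ : ℝ) (ξ : Fin n → ℝ) (tσ : ℝ) (tξ : Fin n → ℝ) : ℂ :=
  (-1 : ℂ) ^ k * Complex.I * ((σ : ℂ) + Complex.I * (tσ : ℂ)) ^ 2 +
    ∑ j, ∑ l, (R j l : ℂ) * ((ξ j : ℂ) + Complex.I * (tξ j : ℂ)) *
      ((ξ l : ℂ) + Complex.I * (tξ l : ℂ))

/-- `μ̂_k = 4 t̂_{ξd}² Re m̂_k − 4 t̂_{ξd}⁴ + (Im m̂_k)²`. -/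
noncomputable def muhat {n : ℕ} (R : Fin n → Fin n → ℝ) (k : ℕ)
    (σ : ℝ) (ξ : Fin n → ℝ) (tσ : ℝ) (tξ : Fin n → ℝ) (tξd : ℝ) : ℝ :=
  4 * tξd ^ 2 * (mhat R k σ ξ tσ tξ).re - 4 * tξd ^ 4 + (mhat R k σ ξ tσ tξ).im ^ 2

lemma mhat_norm_le {n : ℕ} (R : Fin n → Fin n → ℝ) (M : ℝ) (hM : ∀ j l, |R j l| ≤ M) (k : ℕ)
    (hM0 : 0 ≤ M)
    (σ : ℝ) (ξ : Fin n → ℝ) (tσ : ℝ) (tξ : Fin n → ℝ) :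
    ‖mhat R k σ ξ tσ tξ‖ ≤
      (M * n + 1) * ((σ ^ 2 + ∑ j, (ξ j) ^ 2) + (tσ ^ 2 + ∑ j, (tξ j) ^ 2)) := by
  have key : ∀ a b : ℝ, ‖(a : ℂ) + Complex.I * (b : ℂ)‖ ^ 2 = a ^ 2 + b ^ 2 := by
    intro a b
    rw [← Complex.normSq_eq_norm_sq, Complex.normSq_apply]
    simp
    ring
  unfold mhat
  refine (norm_add_le _ _).trans ?_
  have h1 : ‖(-1 : ℂ) ^ k * Complex.I * ((σ : ℂ) + Complex.I * (tσ : ℂ)) ^ 2‖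
      = σ ^ 2 + tσ ^ 2 := by
    rw [norm_mul, norm_mul, norm_pow, norm_pow, key]
    simp
  set w : Fin n → ℝ := fun j => ‖(ξ j : ℂ) + Complex.I * (tξ j : ℂ)‖ with hw
  have hw2 : ∑ j, w j ^ 2 = ∑ j, (ξ j) ^ 2 + ∑ j, (tξ j) ^ 2 := by
    rw [← Finset.sum_add_distrib]
    exact Finset.sum_congr rfl fun j _ => key _ _
  have h2 : ‖∑ j, ∑ l, (R j l : ℂ) * ((ξ j : ℂ) + Complex.I * (tξ j : ℂ)) *
      ((ξ l : ℂ) + Complex.I * (tξ l : ℂ))‖ ≤ M * n * ∑ j, w j ^ 2 := by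
    calc _ ≤ ∑ j, ∑ l, M * ((w j ^ 2 + w l ^ 2) / 2) := by
          refine (norm_sum_le _ _).trans (Finset.sum_le_sum fun j _ => ?_)
          refine (norm_sum_le _ _).trans (Finset.sum_le_sum fun l _ => ?_)
          rw [norm_mul, norm_mul, Complex.norm_real, Real.norm_eq_abs, mul_assoc]
          have : w j * w l ≤ (w j ^ 2 + w l ^ 2) / 2 := by nlinarith [sq_nonneg (w j - w l)]
          exact mul_le_mul (hM j l) this (by positivity) hM0
      _ = M * n * ∑ j, w j ^ 2 := by
          simp only [← Finset.mul_sum, ← Finset.sum_div, Finset.sum_add_distrib,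
            Finset.sum_const, Finset.card_univ, Fintype.card_fin, nsmul_eq_mul]
          ring
  rw [h1]
  rw [hw2] at h2
  have e1 : 0 ≤ M * n * (σ ^ 2 + tσ ^ 2) := by positivity
  have e2 : 0 ≤ ∑ j, (ξ j) ^ 2 + ∑ j, (tξ j) ^ 2 := by positivity
  linarith

lemma arith_core (B S Z T re im δ : ℝ) (hB : 1 ≤ B) (hS : 0 ≤ S) (hZ : 0 ≤ Z) (hT : 0 ≤ T)
    (hδ : δ ≤ 1 / 4) (hTS : 4 * B * T ≤ S)
    (hre : |re| ≤ B * (Z + T)) (him : |im| ≤ B * (Z + T))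
    (h : -δ * (T + S + Z) ^ 2 ≤ 4 * S * re - 4 * S ^ 2 + im ^ 2) : S ≤ 4 * B * Z := by
  by_contra hcon
  push Not at hcon
  have hq : B * (Z + T) ≤ S / 2 := by linarith
  have hS0 : 0 < S := lt_of_le_of_lt (by positivity) hcon
  have hZT : Z + T ≤ S / 2 := by nlinarith
  have h1 : re ≤ S / 2 := (le_abs_self _).trans (hre.trans hq)
  have h2 : im ^ 2 ≤ (S / 2) ^ 2 := sq_le_sq' (by linarith [neg_abs_le im]) 
    (by linarith [le_abs_self im])
  have h3 : (T + S + Z) ^ 2 ≤ (3 / 2 * S) ^ 2 := pow_le_pow_left₀ (by positivity) (by linarith) 2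
  have h4 : δ * (T + S + Z) ^ 2 ≤ 1 / 4 * (3 / 2 * S) ^ 2 :=
    mul_le_mul hδ h3 (by positivity) (by norm_num)
  nlinarith [mul_le_mul_of_nonneg_left h1 hS]

/-- If `|t̂'| ≤ ε₀ t̂_{ξd}` and `μ̂_k ≥ −δ λ̂⁴` with `δ ≤ δ₀` small, then `|t̂| ≤ C |ζ'|`. -/
theorem stmt13 (n : ℕ) (K : Type*) [MetricSpace K] [CompactSpace K]
    (R : K → Fin n → Fin n → ℝ)
    (hRcont : ∀ j l, Continuous fun z => R z j l)
    (c : ℝ) (hc : 0 < c)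
    (hpd : ∀ (z : K) (η : Fin n → ℝ), c * (∑ j, (η j) ^ 2) ≤ ∑ j, ∑ l, R z j l * η j * η l)
    (k : ℕ) (hk : k = 1 ∨ k = 2) :
    ∃ δ₀ > 0, ∃ ε₀ > 0, ∃ C > 0,
      ∀ δ : ℝ, 0 < δ → δ ≤ δ₀ →
      ∀ (z : K) (σ : ℝ) (ξ : Fin n → ℝ) (tσ : ℝ) (tξ : Fin n → ℝ) (tξd : ℝ),
        0 ≤ tξd →
        Real.sqrt (tσ ^ 2 + ∑ j, (tξ j) ^ 2) ≤ ε₀ * tξd →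
        -δ * (Real.sqrt ((tσ ^ 2 + (∑ j, (tξ j) ^ 2) + tξd ^ 2) +
            (σ ^ 2 + ∑ j, (ξ j) ^ 2))) ^ 4 ≤ muhat (R z) k σ ξ tσ tξ tξd →
        Real.sqrt (tσ ^ 2 + (∑ j, (tξ j) ^ 2) + tξd ^ 2) ≤
          C * Real.sqrt (σ ^ 2 + ∑ j, (ξ j) ^ 2) := by
  have hcont : Continuous R := continuous_pi fun j => continuous_pi fun l => hRcont j l
  obtain ⟨M', hM'⟩ := isCompact_univ.exists_bound_of_continuousOn hcont.continuousOn
  set M := max M' 0 with hMdef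
  have hM0 : 0 ≤ M := le_max_right _ _
  have hM : ∀ z j l, |R z j l| ≤ M := fun z j l =>
    ((norm_le_pi_norm (R z j) l).trans ((norm_le_pi_norm (R z) j).trans
      (hM' z (Set.mem_univ z)))).trans (le_max_left _ _)
  set B := M * n + 1 with hBdef
  have hB : 1 ≤ B := by
    have : 0 ≤ M * n := by positivity
    linarith
  have hB0 : 0 < B := by linarith
  refine ⟨1 / 4, by norm_num, 1 / (4 * B), by positivity, 8 * B, by positivity, ?_⟩
  intro δ hδ0 hδ z σ ξ tσ tξ s hs hts hmu
  have hm := mhat_norm_le (R z) M (hM z) k hM0 σ ξ tσ tξ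
  set Z := σ ^ 2 + ∑ j, (ξ j) ^ 2 with hZ
  set T := tσ ^ 2 + ∑ j, (tξ j) ^ 2 with hT
  have hZ0 : 0 ≤ Z := by positivity
  have hT0 : 0 ≤ T := by positivity
  have hTs : T ≤ (1 / (4 * B) * s) ^ 2 := (Real.sqrt_le_left (by positivity)).1 hts
  have hTS : 4 * B * T ≤ s ^ 2 := by
    have e : (1 / (4 * B) * s) ^ 2 * (16 * B ^ 2) = s ^ 2 := by field_simp; ring
    have : T * (16 * B ^ 2) ≤ s ^ 2 := by
      rw [← e]; exact mul_le_mul_of_nonneg_right hTs (by positivity)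
    nlinarith [mul_nonneg hT0 hB0.le, mul_nonneg (mul_nonneg hT0 hB0.le) (sub_nonneg.2 hB)]
  have h4 : (Real.sqrt (T + s ^ 2 + Z)) ^ 4 = (T + s ^ 2 + Z) ^ 2 := by
    rw [show (4 : ℕ) = 2 * 2 from rfl, pow_mul, Real.sq_sqrt (by positivity)]
  rw [h4] at hmu
  unfold muhat at hmu
  have hSZ := arith_core B (s ^ 2) Z T _ _ δ hB (sq_nonneg s) hZ0 hT0 hδ hTS
    ((Complex.abs_re_le_norm _).trans hm) ((Complex.abs_im_le_norm _).trans hm)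
    (hmu.trans (le_of_eq (by ring)))
  refine Real.sqrt_le_iff.2 ⟨by positivity, ?_⟩
  rw [mul_pow, Real.sq_sqrt hZ0]
  have hTle : T ≤ s ^ 2 := by nlinarith
  nlinarith [mul_nonneg hZ0 hB0.le, mul_nonneg (mul_nonneg hZ0 hB0.le) (sub_nonneg.2 hB)]
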